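/- Let X = (x_1,…,x_n), Y = (y_1,…,y_n) ∈ (ℝ^d)^n and θ ∈ S^{d−1} satisfy P_θ x_1 ≤ … ≤ P_θ x_n and P_θ y_1 ≤ … ≤ P_θ y_n. Then CW_θ²((1/n)Σ_i δ_{x_i}, (1/n)Σ_j δ_{y_j}) = min over P ∈ U ∩ P_θ(X,Y) of Σ_{i=1}^n Σ_{j=1}^n ‖x_i − y_j‖² P_{ij}. -/

import Mathlib

open MeasureTheory Filter Topology ProbabilityTheory
open scoped ENNReal RealInnerProductSpace Classical

noncomputable section

/-- Euclidean space ℝ^d. -/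
abbrev Euc (d : ℕ) : Type := EuclideanSpace ℝ (Fin d)

/-- `P2` : Borel probability measures with finite second moment. -/
def P2 {E : Type*} [NormedAddCommGroup E] [MeasurableSpace E] : Set (Measure E) :=
  {μ | IsProbabilityMeasure μ ∧ Integrable (fun x => ‖x‖ ^ 2) μ}

/-- Couplings between two measures. -/
def Coupling {E F : Type*} [MeasurableSpace E] [MeasurableSpace F]
    (μ : Measure E) (ν : Measure F) : Set (Measure (E × F)) :=
  {π | IsProbabilityMeasure π ∧ π.map Prod.fst = μ ∧ π.map Prod.snd = ν}

/-- Quadratic transport cost of a plan. -/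
def tCost {E : Type*} [NormedAddCommGroup E] [MeasurableSpace E]
    (π : Measure (E × E)) : ℝ :=
  ∫ p, ‖p.1 - p.2‖ ^ 2 ∂π

/-- Squared 2-Wasserstein distance. -/
def W2sq {E : Type*} [NormedAddCommGroup E] [MeasurableSpace E] (μ ν : Measure E) : ℝ :=
  sInf (tCost '' Coupling μ ν)

/-- 2-Wasserstein distance. -/
def W2 {E : Type*} [NormedAddCommGroup E] [MeasurableSpace E] (μ ν : Measure E) : ℝ :=
  Real.sqrt (W2sq μ ν)

/-- Optimal transport plans for the quadratic cost. -/
def OptPlan {E : Type*} [NormedAddCommGroup E] [MeasurableSpace E]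
    (μ ν : Measure E) : Set (Measure (E × E)) :=
  {π | π ∈ Coupling μ ν ∧ tCost π = W2sq μ ν}

/-- `Gamma ν μ1 μ2` : probability measures on `E × E × E` whose (1,2)-marginal is an optimal
plan between `ν` and `μ1` and whose (1,3)-marginal is an optimal plan between `ν` and `μ2`. -/
def Gamma {E : Type*} [NormedAddCommGroup E] [MeasurableSpace E]
    (ν μ1 μ2 : Measure E) : Set (Measure (E × E × E)) :=
  {ρ | IsProbabilityMeasure ρ ∧
    ρ.map (fun p => (p.1, p.2.1)) ∈ OptPlan ν μ1 ∧
    ρ.map (fun p => (p.1, p.2.2)) ∈ OptPlan ν μ2}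

/-- Cost `∫ ‖x1 − x2‖² dρ(y, x1, x2)` of a 3-plan. -/
def pivotCost {E : Type*} [NormedAddCommGroup E] [MeasurableSpace E]
    (ρ : Measure (E × E × E)) : ℝ :=
  ∫ p, ‖p.2.1 - p.2.2‖ ^ 2 ∂ρ

/-- Squared ν-based Wasserstein discrepancy. -/
def Wnusq {E : Type*} [NormedAddCommGroup E] [MeasurableSpace E]
    (ν μ1 μ2 : Measure E) : ℝ :=
  sInf (pivotCost '' Gamma ν μ1 μ2)

/-- ν-based Wasserstein discrepancy. -/
def Wnu {E : Type*} [NormedAddCommGroup E] [MeasurableSpace E]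
    (ν μ1 μ2 : Measure E) : ℝ :=
  Real.sqrt (Wnusq ν μ1 μ2)

/-- Weak convergence of a sequence of measures (against bounded continuous functions). -/
def WeakConv {E : Type*} [MeasurableSpace E] [TopologicalSpace E]
    (μs : ℕ → Measure E) (μ : Measure E) : Prop :=
  ∀ f : BoundedContinuousFunction E ℝ,
    Tendsto (fun n => ∫ x, f x ∂(μs n)) atTop (𝓝 (∫ x, f x ∂μ))

/-- Quantile function (pseudo-inverse c.d.f.) of a measure on ℝ. -/
def quantile (ν : Measure ℝ) (t : ℝ) : ℝ :=
  sInf {s : ℝ | ENNReal.ofReal t ≤ ν (Set.Iic s)}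

/-- Pushforward of `μ` by the projection `P_θ : x ↦ ⟪θ, x⟫`. -/
def projLine {d : ℕ} (θ : Euc d) (μ : Measure (Euc d)) : Measure ℝ :=
  μ.map (fun x => ⟪θ, x⟫)

/-- `μ_θ[μ1, μ2]` : the (unique) Wasserstein mean of `Q_θ#μ1` and `Q_θ#μ2`, given by the
explicit quantile formula `[(½ F_{ν1}^{[-1]} + ½ F_{ν2}^{[-1]})·θ]#L_{[0,1]}`. -/
def pivotMiddle {d : ℕ} (θ : Euc d) (μ1 μ2 : Measure (Euc d)) : Measure (Euc d) :=
  (volume.restrict (Set.Icc (0 : ℝ) 1)).map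
    (fun t => ((1 / 2) * quantile (projLine θ μ1) t
      + (1 / 2) * quantile (projLine θ μ2) t) • θ)

/-- Squared Pivot Sliced discrepancy. -/
def PSsq {d : ℕ} (θ : Euc d) (μ1 μ2 : Measure (Euc d)) : ℝ :=
  Wnusq (pivotMiddle θ μ1 μ2) μ1 μ2

/-- Pivot Sliced discrepancy. -/
def PS {d : ℕ} (θ : Euc d) (μ1 μ2 : Measure (Euc d)) : ℝ :=
  Real.sqrt (PSsq θ μ1 μ2)

/-- `π_θ[μ1, μ2]` : the unique optimal 1D plan between `P_θ#μ1` and `P_θ#μ2`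
(co-monotone quantile coupling). -/
def piTheta {d : ℕ} (θ : Euc d) (μ1 μ2 : Measure (Euc d)) : Measure (ℝ × ℝ) :=
  (volume.restrict (Set.Icc (0 : ℝ) 1)).map
    (fun t => (quantile (projLine θ μ1) t, quantile (projLine θ μ2) t))

/-- `Ω_θ(μ1, μ2)` : couplings of `μ1, μ2` whose projection by `(P_θ, P_θ)` is `π_θ[μ1, μ2]`. -/
def OmegaTheta {d : ℕ} (θ : Euc d) (μ1 μ2 : Measure (Euc d)) :
    Set (Measure (Euc d × Euc d)) :=
  {ω | ω ∈ Coupling μ1 μ2 ∧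
    ω.map (fun p => (⟪θ, p.1⟫, ⟪θ, p.2⟫)) = piTheta θ μ1 μ2}

/-- Squared constrained Wasserstein discrepancy `CW_θ²`. -/
def CWsq {d : ℕ} (θ : Euc d) (μ1 μ2 : Measure (Euc d)) : ℝ :=
  sInf (tCost '' OmegaTheta θ μ1 μ2)

/-- Wasserstein means: minimisers of `μ ↦ W₂²(μ1, μ) + W₂²(μ, μ2)` over `P2`. -/
def WMean {d : ℕ} (μ1 μ2 : Measure (Euc d)) : Set (Measure (Euc d)) :=
  {μ | μ ∈ (P2 : Set (Measure (Euc d))) ∧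
    ∀ μ' ∈ (P2 : Set (Measure (Euc d))),
      W2sq μ1 μ + W2sq μ μ2 ≤ W2sq μ1 μ' + W2sq μ' μ2}

/-- Uniform empirical measure `1/n ∑ δ_{x_i}`. -/
def empMeasure {d n : ℕ} (x : Fin n → Euc d) : Measure (Euc d) :=
  (n : ℝ≥0∞)⁻¹ • ∑ i, Measure.dirac (x i)

/-- Doubly "stochastic" matrices with row and column sums `1/n`. -/
def Umat (n : ℕ) : Set (Matrix (Fin n) (Fin n) ℝ) :=
  {P | (∀ i j, 0 ≤ P i j) ∧ (∀ i, ∑ j, P i j = 1 / n) ∧ (∀ j, ∑ i, P i j = 1 / n)}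

/-- The constraint set `P_θ(X, Y)` : matrices exchanging, between each ambiguity group
`I_a = {i : ⟪θ, x i⟫ = s}` and `J_b = {j : ⟪θ, y j⟫ = t}`, exactly the mass
`#(I_a ∩ J_b)/n` prescribed by the 1D optimal plan. -/
def PthetaSet {d n : ℕ} (θ : Euc d) (x y : Fin n → Euc d) :
    Set (Matrix (Fin n) (Fin n) ℝ) :=
  {P | ∀ s t : ℝ,
    ∑ i ∈ Finset.univ.filter (fun i => (⟪θ, x i⟫ : ℝ) = s),
      ∑ j ∈ Finset.univ.filter (fun j => (⟪θ, y j⟫ : ℝ) = t), P i j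
      = ((Finset.univ.filter
          (fun k => (⟪θ, x k⟫ : ℝ) = s ∧ (⟪θ, y k⟫ : ℝ) = t)).card : ℝ) / n}

/-!
With equal weights, both empirical measures are images of the uniform measure on the index set
`{1, …, n}`. By gluing along these maps, every coupling of them lifts to a coupling of the uniform
measure with itself, that is, to a matrix in `U`, and the transport cost becomes
`∑ᵢⱼ ‖xᵢ - yⱼ‖² Pᵢⱼ`. Since the projections are sorted, the quantile functions of both projected
measures at `t` are the projections of the points of the same index `⌈n t⌉`, so `π_θ` is the law of
`(P_θ x_k, P_θ y_k)` for a uniform index `k`. The constraint on the projected coupling compares two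
atomic measures, hence amounts to equality of the masses of points, which is membership in
`P_θ(X, Y)`. The minimum is attained because `U ∩ P_θ(X, Y)` is compact and contains `(1/n) I`.
-/

section Coupling

variable {α β Ω Ω' : Type*} [MeasurableSpace α] [MeasurableSpace β]
  [MeasurableSpace Ω] [MeasurableSpace Ω']

lemma coupling_map_of_mem {f : Ω → α} {g : Ω' → β} (hf : Measurable f) (hg : Measurable g)
    {μ : Measure Ω} {ν : Measure Ω'} {γ : Measure (Ω × Ω')} (hγ : γ ∈ Coupling μ ν) :
    γ.map (Prod.map f g) ∈ Coupling (μ.map f) (ν.map g) := by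
  obtain ⟨_, hfst, hsnd⟩ := hγ
  refine ⟨Measure.isProbabilityMeasure_map (by fun_prop), ?_, ?_⟩
  · rw [Measure.map_map (by fun_prop) (by fun_prop), Prod.map_fst', ← hfst,
      Measure.map_map hf measurable_fst]
  · rw [Measure.map_map (by fun_prop) (by fun_prop), Prod.map_snd', ← hsnd,
      Measure.map_map hg measurable_snd]

lemma map_condDistrib_id_ae_eq_dirac [StandardBorelSpace α] [Nonempty α] [StandardBorelSpace Ω]
    [Nonempty Ω] {f : Ω → α} (hf : Measurable f) (μ : Measure Ω) [IsFiniteMeasure μ] :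
    ∀ᵐ a ∂μ.map f, (condDistrib id f μ a).map f = Measure.dirac a := by
  filter_upwards [condDistrib_comp f (Y := id) aemeasurable_id hf, condDistrib_self (μ := μ) f]
    with a hcomp hself
  rw [← Kernel.map_apply _ hf, ← hcomp, Function.comp_id, hself, Kernel.id_apply]

lemma map_fst_parallelComp_comp (κ : Kernel α Ω) [IsSFiniteKernel κ] (η : Kernel β Ω')
    [IsMarkovKernel η] (ω : Measure (α × β)) :
    ((κ ∥ₖ η) ∘ₘ ω).map Prod.fst = κ ∘ₘ ω.map Prod.fst := by
  rw [Measure.map_comp _ _ measurable_fst, ← Measure.deterministic_comp_eq_map measurable_fst,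
    Measure.comp_assoc, Kernel.comp_deterministic_eq_comap]
  congr with p : 1
  rw [Kernel.map_apply _ measurable_fst, Kernel.parallelComp_apply, Kernel.comap_apply]
  exact Measure.fst_prod

lemma map_snd_parallelComp_comp (κ : Kernel α Ω) [IsMarkovKernel κ] (η : Kernel β Ω')
    [IsSFiniteKernel η] (ω : Measure (α × β)) :
    ((κ ∥ₖ η) ∘ₘ ω).map Prod.snd = η ∘ₘ ω.map Prod.snd := by
  rw [Measure.map_comp _ _ measurable_snd, ← Measure.deterministic_comp_eq_map measurable_snd,
    Measure.comp_assoc, Kernel.comp_deterministic_eq_comap]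
  congr with p : 1
  rw [Kernel.map_apply _ measurable_snd, Kernel.parallelComp_apply, Kernel.comap_apply]
  exact Measure.snd_prod

-- Gluing: `γ` draws `(a, b)` from `ω`, then independently a point of the fibre of `f` over `a` and
-- a point of the fibre of `g` over `b` according to the disintegrations of `μ` and `ν`.
lemma exists_coupling_map_eq [StandardBorelSpace α] [StandardBorelSpace β]
    [StandardBorelSpace Ω] [Nonempty Ω] [StandardBorelSpace Ω'] [Nonempty Ω']
    {f : Ω → α} {g : Ω' → β} (hf : Measurable f) (hg : Measurable g)
    {μ : Measure Ω} {ν : Measure Ω'} [IsFiniteMeasure μ] [IsFiniteMeasure ν]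
    {ω : Measure (α × β)} (hω : ω ∈ Coupling (μ.map f) (ν.map g)) :
    ∃ γ ∈ Coupling μ ν, γ.map (Prod.map f g) = ω := by
  obtain ⟨_, hfst, hsnd⟩ := hω
  have : Nonempty α := ‹Nonempty Ω›.map f
  have : Nonempty β := ‹Nonempty Ω'›.map g
  set κ : Kernel α Ω := condDistrib id f μ
  set η : Kernel β Ω' := condDistrib id g ν
  have hκ : ∀ᵐ p ∂ω, (κ p.1).map f = Measure.dirac p.1 :=
    ae_of_ae_map measurable_fst.aemeasurable (hfst ▸ map_condDistrib_id_ae_eq_dirac hf μ)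
  have hη : ∀ᵐ p ∂ω, (η p.2).map g = Measure.dirac p.2 :=
    ae_of_ae_map measurable_snd.aemeasurable (hsnd ▸ map_condDistrib_id_ae_eq_dirac hg ν)
  refine ⟨(κ ∥ₖ η) ∘ₘ ω, ⟨inferInstance, ?_, ?_⟩, ?_⟩
  · rw [map_fst_parallelComp_comp, hfst, condDistrib_comp_map hf.aemeasurable aemeasurable_id,
      Measure.map_id]
  · rw [map_snd_parallelComp_comp, hsnd, condDistrib_comp_map hg.aemeasurable aemeasurable_id,
      Measure.map_id]
  · rw [Measure.map_comp _ _ (hf.prodMap hg)]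
    calc (κ ∥ₖ η).map (Prod.map f g) ∘ₘ ω = Kernel.id ∘ₘ ω := by
          refine Measure.comp_congr ?_
          filter_upwards [hκ, hη] with p hκp hηp
          rw [Kernel.map_apply _ (hf.prodMap hg), Kernel.parallelComp_apply,
            ← Measure.map_prod_map _ _ hf hg, hκp, hηp, Measure.dirac_prod_dirac, Kernel.id_apply]
      _ = ω := Measure.id_comp

lemma coupling_map_map [StandardBorelSpace α] [StandardBorelSpace β]
    [StandardBorelSpace Ω] [Nonempty Ω] [StandardBorelSpace Ω'] [Nonempty Ω']
    {f : Ω → α} {g : Ω' → β} (hf : Measurable f) (hg : Measurable g)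
    (μ : Measure Ω) (ν : Measure Ω') [IsFiniteMeasure μ] [IsFiniteMeasure ν] :
    Coupling (μ.map f) (ν.map g) = Measure.map (Prod.map f g) '' Coupling μ ν := by
  refine Set.Subset.antisymm (fun ω hω => exists_coupling_map_eq hf hg hω) ?_
  rintro _ ⟨γ, hγ, rfl⟩
  exact coupling_map_of_mem hf hg hγ

end Coupling

section Atomic

variable {α ι κ : Type*} [MeasurableSpace α] [MeasurableSpace ι] [MeasurableSpace κ]

lemma map_eq_map_iff_measureReal_preimage_singleton [MeasurableSingletonClass α]
    [Countable ι] [Countable κ] {μ : Measure ι} {ν : Measure κ} [IsFiniteMeasure μ]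
    [IsFiniteMeasure ν] {f : ι → α} {g : κ → α} (hf : Measurable f) (hg : Measurable g) :
    μ.map f = ν.map g ↔ ∀ a, μ.real (f ⁻¹' {a}) = ν.real (g ⁻¹' {a}) := by
  refine ⟨fun h a => ?_, fun h => Measure.ext fun s hs => ?_⟩
  · rw [← map_measureReal_apply hf (measurableSet_singleton a), h,
      map_measureReal_apply hg (measurableSet_singleton a)]
  · let C : Set α := s ∩ (Set.range f ∪ Set.range g)
    have hC : C.Countable :=
      ((Set.countable_range f).union (Set.countable_range g)).mono Set.inter_subset_right
    have hfC : f ⁻¹' s = f ⁻¹' C := by ext; simp [C]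
    have hgC : g ⁻¹' s = g ⁻¹' C := by ext; simp [C]
    have hatom : ∀ a, μ (f ⁻¹' {a}) = ν (g ⁻¹' {a}) := fun a =>
      (measureReal_eq_measureReal_iff).1 (h a)
    rw [Measure.map_apply hf hs, Measure.map_apply hg hs, hfC, hgC,
      ← tsum_measure_preimage_singleton hC fun a _ => hf (measurableSet_singleton a),
      ← tsum_measure_preimage_singleton hC fun a _ => hg (measurableSet_singleton a)]
    exact tsum_congr fun a => hatom a

instance isProbabilityMeasure_uniformOn_univ [Finite ι] [Nonempty ι]
    [MeasurableSingletonClass ι] : IsProbabilityMeasure (uniformOn (Set.univ : Set ι)) :=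
  isProbabilityMeasure_uniformOn Set.finite_univ Set.univ_nonempty

lemma measureReal_uniformOn_univ [Fintype ι] [MeasurableSingletonClass ι] (s : Finset ι) :
    (uniformOn (Set.univ : Set ι)).real s = s.card / Fintype.card ι := by
  rw [measureReal_def, uniformOn_univ, Measure.count_apply_finset, ENNReal.toReal_div,
    ENNReal.toReal_natCast, ENNReal.toReal_natCast]

end Atomic

section Quantile

lemma empMeasure_eq_map_uniformOn {d n : ℕ} (x : Fin n → Euc d) :
    empMeasure x = (uniformOn Set.univ).map x := by
  ext s hs
  have hcount : Measure.count (x ⁻¹' s) = ∑ i, Measure.dirac (x i) s := by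
    rw [← lintegral_indicator_one (measurable_of_finite x hs), lintegral_count, tsum_fintype]
    simp only [Measure.dirac_apply' _ hs]
    rfl
  rw [Measure.map_apply (measurable_of_finite x) hs, uniformOn_univ, Fintype.card_fin, hcount,
    ENNReal.div_eq_inv_mul, empMeasure, Measure.smul_apply, Measure.finsetSum_apply, smul_eq_mul]

lemma Ioc_div_subset_Ioc_zero_one {n : ℕ} (k : Fin n) :
    Set.Ioc ((k : ℝ) / n) ((k + 1) / n) ⊆ Set.Ioc 0 1 := by
  refine Set.Ioc_subset_Ioc (by positivity) (div_le_one_of_le₀ ?_ n.cast_nonneg)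
  exact_mod_cast k.isLt

variable {n : ℕ} [NeZero n]

/-- The index of the order statistic that realises the `t`-quantile of `n` equally weighted
sorted points: `k` for `k / n < t ≤ (k + 1) / n`. Only its values on `(0, 1]` are meaningful. -/
def quantileIndex (n : ℕ) [NeZero n] (t : ℝ) : Fin n := Fin.ofNat n (⌈t * n⌉₊ - 1)

lemma measurable_quantileIndex : Measurable (quantileIndex n) :=
  (measurable_of_countable fun m => Fin.ofNat n (m - 1)).comp
    (Nat.measurable_ceil.comp (measurable_id.mul_const _))

lemma quantileIndex_add_one {t : ℝ} (ht : t ∈ Set.Ioc (0 : ℝ) 1) :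
    (quantileIndex n t : ℕ) + 1 = ⌈t * n⌉₊ := by
  have hn : (0 : ℝ) < n := Nat.cast_pos.2 (NeZero.pos n)
  have hpos : 0 < ⌈t * n⌉₊ := Nat.ceil_pos.2 (mul_pos ht.1 hn)
  have hle : ⌈t * n⌉₊ ≤ n := Nat.ceil_le.2 (mul_le_of_le_one_left hn.le ht.2)
  rw [quantileIndex, Fin.val_ofNat, Nat.mod_eq_of_lt (by omega), Nat.sub_add_cancel hpos]

lemma quantileIndex_eq_iff {t : ℝ} (ht : t ∈ Set.Ioc (0 : ℝ) 1) {k : Fin n} :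
    quantileIndex n t = k ↔ t ∈ Set.Ioc ((k : ℝ) / n) ((k + 1) / n) := by
  have hn : (0 : ℝ) < n := Nat.cast_pos.2 (NeZero.pos n)
  rw [Fin.ext_iff, ← Nat.add_right_cancel_iff (n := 1), quantileIndex_add_one ht,
    Nat.ceil_eq_iff k.val.succ_ne_zero, Nat.succ_sub_one, Nat.cast_succ, Set.mem_Ioc,
    div_lt_iff₀ hn, le_div_iff₀ hn]

lemma quantile_map_uniformOn {u : Fin n → ℝ} (hu : Monotone u) {t : ℝ}
    (ht : t ∈ Set.Ioc (0 : ℝ) 1) :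
    quantile ((uniformOn Set.univ).map u) t = u (quantileIndex n t) := by
  have hn : (0 : ℝ) < n := Nat.cast_pos.2 (NeZero.pos n)
  have hcdf (s : ℝ) : ENNReal.ofReal t ≤ (uniformOn Set.univ).map u (Set.Iic s)
      ↔ u (quantileIndex n t) ≤ s := by
    have hpre : u ⁻¹' Set.Iic s = (Finset.univ.filter fun i => u i ≤ s : Finset (Fin n)) := by
      ext; simp
    rw [Measure.map_apply (measurable_of_finite u) measurableSet_Iic,
      ENNReal.ofReal_le_iff_le_toReal (measure_ne_top _ _), ← measureReal_def, hpre,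
      measureReal_uniformOn_univ, Fintype.card_fin, le_div_iff₀ hn, ← Nat.ceil_le,
      ← quantileIndex_add_one ht, Nat.succ_le_iff,
      Tuple.lt_card_le_iff_apply_le_of_monotone hu]
  simp only [quantile, hcdf]
  exact csInf_Ici

lemma map_quantileIndex_volume :
    (volume.restrict (Set.Icc (0 : ℝ) 1)).map (quantileIndex n) = uniformOn Set.univ := by
  have hn : (0 : ℝ) < n := Nat.cast_pos.2 (NeZero.pos n)
  refine Measure.ext_of_singleton fun k => ?_
  have hpre : quantileIndex n ⁻¹' {k} ∩ Set.Ioc (0 : ℝ) 1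
      = Set.Ioc ((k : ℝ) / n) ((k + 1) / n) := by
    ext t
    refine ⟨fun h => (quantileIndex_eq_iff h.2).1 h.1, fun h => ?_⟩
    have ht := Ioc_div_subset_Ioc_zero_one k h
    exact ⟨(quantileIndex_eq_iff ht).2 h, ht⟩
  rw [← restrict_Ioc_eq_restrict_Icc,
    Measure.map_apply measurable_quantileIndex (measurableSet_singleton k),
    Measure.restrict_apply (measurable_quantileIndex (measurableSet_singleton k)), hpre,
    Real.volume_Ioc, ← sub_div, add_sub_cancel_left, uniformOn_univ, Measure.count_singleton,
    Fintype.card_fin, ENNReal.ofReal_div_of_pos hn, ENNReal.ofReal_one, ENNReal.ofReal_natCast]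

lemma piTheta_empMeasure {d : ℕ} {θ : Euc d} {x y : Fin n → Euc d}
    (hx : Monotone fun i => (⟪θ, x i⟫ : ℝ)) (hy : Monotone fun i => (⟪θ, y i⟫ : ℝ)) :
    piTheta θ (empMeasure x) (empMeasure y)
      = (uniformOn Set.univ).map fun k => ((⟪θ, x k⟫ : ℝ), (⟪θ, y k⟫ : ℝ)) := by
  have hproj (z : Fin n → Euc d) :
      projLine θ (empMeasure z) = (uniformOn Set.univ).map fun i => (⟪θ, z i⟫ : ℝ) := by
    rw [projLine, empMeasure_eq_map_uniformOn,
      Measure.map_map (by fun_prop) (measurable_of_finite z)]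
    rfl
  rw [← map_quantileIndex_volume, Measure.map_map (measurable_of_finite _) measurable_quantileIndex,
    piTheta, hproj, hproj, ← restrict_Ioc_eq_restrict_Icc]
  refine Measure.map_congr ?_
  filter_upwards [ae_restrict_mem measurableSet_Ioc] with t ht
  rw [quantile_map_uniformOn hx ht, quantile_map_uniformOn hy ht, Function.comp_apply]

end Quantile

section MassMatrix

/-- The matrix of the masses that a measure on `ι × κ` gives to points. It encodes a transport plan
between clouds indexed by `ι` and `κ`. -/
def massMatrix {ι κ : Type*} [MeasurableSpace ι] [MeasurableSpace κ] (γ : Measure (ι × κ)) :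
    Matrix ι κ ℝ :=
  Matrix.of fun i j => γ.real {(i, j)}

section

variable {ι κ : Type*} [MeasurableSpace ι] [MeasurableSpace κ]
  [MeasurableSingletonClass ι] [MeasurableSingletonClass κ]

lemma sum_sum_massMatrix (γ : Measure (ι × κ)) [IsFiniteMeasure γ] (I : Finset ι) (J : Finset κ) :
    ∑ i ∈ I, ∑ j ∈ J, massMatrix γ i j = γ.real (I ×ˢ J : Set (ι × κ)) := by
  rw [← Finset.coe_product, ← sum_measureReal_singleton, Finset.sum_product]
  rfl

lemma exists_massMatrix_eq [Finite ι] [Finite κ] {P : Matrix ι κ ℝ} (hP : ∀ i j, 0 ≤ P i j) :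
    ∃ γ : Measure (ι × κ), IsFiniteMeasure γ ∧ massMatrix γ = P := by
  have := Fintype.ofFinite (ι × κ)
  refine ⟨Measure.count.withDensity fun p => ENNReal.ofReal (P p.1 p.2), ?_, ?_⟩
  · refine isFiniteMeasure_withDensity ?_
    rw [lintegral_count, tsum_fintype]
    exact (ENNReal.sum_lt_top.2 fun p _ => ENNReal.ofReal_lt_top).ne
  · ext i j
    rw [massMatrix, Matrix.of_apply, measureReal_def,
      withDensity_apply _ (measurableSet_singleton _), lintegral_singleton,
      Measure.count_singleton, mul_one, ENNReal.toReal_ofReal (hP i j)]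

end

variable {d n : ℕ}

lemma massMatrix_mem_Umat_iff [NeZero n] {γ : Measure (Fin n × Fin n)} [IsFiniteMeasure γ] :
    massMatrix γ ∈ Umat n ↔ γ ∈ Coupling (uniformOn Set.univ) (uniformOn Set.univ) := by
  have hunif (i : Fin n) : (uniformOn (Set.univ : Set (Fin n))).real {i} = 1 / n := by
    simpa using measureReal_uniformOn_univ {i}
  have hrow (i : Fin n) : (γ.map Prod.fst).real {i} = ∑ j, massMatrix γ i j := by
    rw [map_measureReal_apply measurable_fst (measurableSet_singleton i)]
    simpa [Set.prod_univ] using (sum_sum_massMatrix γ {i} Finset.univ).symm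
  have hcol (j : Fin n) : (γ.map Prod.snd).real {j} = ∑ i, massMatrix γ i j := by
    rw [map_measureReal_apply measurable_snd (measurableSet_singleton j)]
    simpa [Set.univ_prod] using (sum_sum_massMatrix γ Finset.univ {j}).symm
  constructor
  · rintro ⟨-, hrows, hcols⟩
    have hfst : γ.map Prod.fst = uniformOn Set.univ :=
      ext_iff_measureReal_singleton.2 fun i => by rw [hrow, hrows, hunif]
    have hsnd : γ.map Prod.snd = uniformOn Set.univ :=
      ext_iff_measureReal_singleton.2 fun j => by rw [hcol, hcols, hunif]
    have : IsProbabilityMeasure (γ.map Prod.fst) := hfst ▸ inferInstance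
    exact ⟨Measure.isProbabilityMeasure_of_map Prod.fst, hfst, hsnd⟩
  · rintro ⟨-, hfst, hsnd⟩
    exact ⟨fun _ _ => measureReal_nonneg, fun i => by rw [← hrow, hfst, hunif],
      fun j => by rw [← hcol, hsnd, hunif]⟩

lemma massMatrix_mem_PthetaSet_iff {γ : Measure (Fin n × Fin n)} [IsFiniteMeasure γ]
    {θ : Euc d} {x y : Fin n → Euc d} :
    massMatrix γ ∈ PthetaSet θ x y ↔
      γ.map (Prod.map (fun i => (⟪θ, x i⟫ : ℝ)) (fun j => (⟪θ, y j⟫ : ℝ)))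
        = (uniformOn Set.univ).map fun k => ((⟪θ, x k⟫ : ℝ), (⟪θ, y k⟫ : ℝ)) := by
  rw [map_eq_map_iff_measureReal_preimage_singleton (measurable_of_finite _)
    (measurable_of_finite _), Prod.forall]
  refine forall₂_congr fun s t => ?_
  have hplan : (Prod.map (fun i => (⟪θ, x i⟫ : ℝ)) fun j => (⟪θ, y j⟫ : ℝ)) ⁻¹' {(s, t)}
      = (Finset.univ.filter fun i => (⟪θ, x i⟫ : ℝ) = s : Finset (Fin n)) ×ˢ
        (Finset.univ.filter fun j => (⟪θ, y j⟫ : ℝ) = t : Finset (Fin n)) := by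
    ext; simp [Prod.ext_iff]
  have hdiag : (fun k => ((⟪θ, x k⟫ : ℝ), (⟪θ, y k⟫ : ℝ))) ⁻¹' {(s, t)}
      = (Finset.univ.filter fun k => (⟪θ, x k⟫ : ℝ) = s ∧ (⟪θ, y k⟫ : ℝ) = t :
        Finset (Fin n)) := by
    ext; simp
  rw [sum_sum_massMatrix, hplan, Finset.coe_product, hdiag, measureReal_uniformOn_univ,
    Fintype.card_fin]

end MassMatrix

section Kantorovich

section

variable {ι κ E : Type*} [Fintype ι] [Fintype κ] [NormedAddCommGroup E]

/-- The objective `∑ᵢⱼ ‖xᵢ - yⱼ‖² Pᵢⱼ` of the discrete Kantorovich problem between the clouds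
`x` and `y`. -/
def kantorovichCost (x : ι → E) (y : κ → E) (P : Matrix ι κ ℝ) : ℝ :=
  ∑ i, ∑ j, ‖x i - y j‖ ^ 2 * P i j

lemma continuous_kantorovichCost (x : ι → E) (y : κ → E) : Continuous (kantorovichCost x y) := by
  unfold kantorovichCost
  fun_prop

lemma tCost_map_prodMap [MeasurableSpace E] [BorelSpace E] [SecondCountableTopology E]
    [MeasurableSpace ι] [MeasurableSpace κ] [MeasurableSingletonClass ι]
    [MeasurableSingletonClass κ] (x : ι → E) (y : κ → E) (γ : Measure (ι × κ))
    [IsFiniteMeasure γ] :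
    tCost (γ.map (Prod.map x y)) = kantorovichCost x y (massMatrix γ) := by
  have hcost : Measurable fun p : E × E => ‖p.1 - p.2‖ ^ 2 := by fun_prop
  rw [tCost, integral_map (measurable_of_finite _).aemeasurable hcost.aestronglyMeasurable,
    integral_fintype Integrable.of_finite, Fintype.sum_prod_type]
  simp only [kantorovichCost, massMatrix, Matrix.of_apply, smul_eq_mul, Prod.map_apply, mul_comm]

end

variable {d n : ℕ}

lemma OmegaTheta_empMeasure [NeZero n] {θ : Euc d} {x y : Fin n → Euc d}
    (hx : Monotone fun i => (⟪θ, x i⟫ : ℝ)) (hy : Monotone fun i => (⟪θ, y i⟫ : ℝ)) :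
    OmegaTheta θ (empMeasure x) (empMeasure y) = Measure.map (Prod.map x y) ''
      {γ | γ ∈ Coupling (uniformOn Set.univ) (uniformOn Set.univ) ∧
        massMatrix γ ∈ PthetaSet θ x y} := by
  have hproj (γ : Measure (Fin n × Fin n)) :
      (γ.map (Prod.map x y)).map (fun p => ((⟪θ, p.1⟫ : ℝ), (⟪θ, p.2⟫ : ℝ)))
        = γ.map (Prod.map (fun i => (⟪θ, x i⟫ : ℝ)) fun j => (⟪θ, y j⟫ : ℝ)) := by
    rw [Measure.map_map (by fun_prop) (measurable_of_finite _)]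
    rfl
  ext ω
  rw [OmegaTheta, piTheta_empMeasure hx hy, empMeasure_eq_map_uniformOn,
    empMeasure_eq_map_uniformOn,
    coupling_map_map (measurable_of_finite x) (measurable_of_finite y)]
  constructor
  · rintro ⟨⟨γ, hγ, rfl⟩, hω⟩
    have := hγ.1
    exact ⟨γ, ⟨hγ, massMatrix_mem_PthetaSet_iff.2 (hproj γ ▸ hω)⟩, rfl⟩
  · rintro ⟨γ, ⟨hγ, hP⟩, rfl⟩
    have := hγ.1
    exact ⟨⟨γ, hγ, rfl⟩, (hproj γ).trans (massMatrix_mem_PthetaSet_iff.1 hP)⟩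

lemma tCost_image_OmegaTheta_empMeasure [NeZero n] {θ : Euc d} {x y : Fin n → Euc d}
    (hx : Monotone fun i => (⟪θ, x i⟫ : ℝ)) (hy : Monotone fun i => (⟪θ, y i⟫ : ℝ)) :
    tCost '' OmegaTheta θ (empMeasure x) (empMeasure y)
      = kantorovichCost x y '' (Umat n ∩ PthetaSet θ x y) := by
  rw [OmegaTheta_empMeasure hx hy]
  ext c
  constructor
  · rintro ⟨_, ⟨γ, ⟨hγ, hP⟩, rfl⟩, rfl⟩
    have := hγ.1
    exact ⟨massMatrix γ, ⟨massMatrix_mem_Umat_iff.2 hγ, hP⟩, (tCost_map_prodMap x y γ).symm⟩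
  · rintro ⟨P, ⟨hU, hP⟩, rfl⟩
    obtain ⟨γ, _, rfl⟩ := exists_massMatrix_eq hU.1
    exact ⟨_, ⟨γ, ⟨massMatrix_mem_Umat_iff.1 hU, hP⟩, rfl⟩, tCost_map_prodMap x y γ⟩

lemma isClosed_Umat : IsClosed (Umat n) := by
  simp only [Umat, Set.ofPred_and, Set.ofPred_forall]
  refine IsClosed.inter ?_ (IsClosed.inter ?_ ?_)
  · exact isClosed_iInter fun i => isClosed_iInter fun j => isClosed_le (by fun_prop) (by fun_prop)
  · exact isClosed_iInter fun i => isClosed_eq (by fun_prop) (by fun_prop)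
  · exact isClosed_iInter fun j => isClosed_eq (by fun_prop) (by fun_prop)

lemma isClosed_PthetaSet (θ : Euc d) (x y : Fin n → Euc d) : IsClosed (PthetaSet θ x y) := by
  simp only [PthetaSet, Set.ofPred_forall]
  exact isClosed_iInter fun s => isClosed_iInter fun t => isClosed_eq (by fun_prop) (by fun_prop)

lemma isCompact_Umat : IsCompact (Umat n) := by
  have hbox : IsCompact (Set.univ.pi fun _ : Fin n => Set.univ.pi fun _ : Fin n =>
      Set.Icc (0 : ℝ) (1 / n)) :=
    isCompact_univ_pi fun _ => isCompact_univ_pi fun _ => isCompact_Icc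
  refine hbox.of_isClosed_subset isClosed_Umat ?_
  rintro P ⟨hnonneg, hrows, -⟩ i - j -
  exact ⟨hnonneg i j,
    (Finset.single_le_sum (fun k _ => hnonneg i k) (Finset.mem_univ j)).trans (hrows i).le⟩

lemma diagonal_mem_Umat_inter_PthetaSet (θ : Euc d) (x y : Fin n → Euc d) :
    Matrix.diagonal (fun _ => 1 / (n : ℝ)) ∈ Umat n ∩ PthetaSet θ x y := by
  refine ⟨⟨fun i j => ?_, fun i => ?_, fun j => ?_⟩, fun s t => ?_⟩
  · rw [Matrix.diagonal_apply]
    positivity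
  · simp [Matrix.diagonal_apply]
  · simp [Matrix.diagonal_apply]
  · simp only [Matrix.diagonal_apply, Finset.sum_ite_eq, Finset.mem_filter_univ]
    rw [← Finset.sum_filter, Finset.filter_filter, Finset.sum_const, nsmul_eq_mul, mul_one_div]

theorem CWsq_discrete_kantorovich_general (hn : 0 < n) (x y : Fin n → Euc d) (θ : Euc d)
    (hx : Monotone fun i => (⟪θ, x i⟫ : ℝ)) (hy : Monotone fun i => (⟪θ, y i⟫ : ℝ)) :
    ∃ P ∈ Umat n ∩ PthetaSet θ x y,
      CWsq θ (empMeasure x) (empMeasure y) = ∑ i, ∑ j, ‖x i - y j‖ ^ 2 * P i j ∧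
      ∀ Q ∈ Umat n ∩ PthetaSet θ x y,
        ∑ i, ∑ j, ‖x i - y j‖ ^ 2 * P i j ≤ ∑ i, ∑ j, ‖x i - y j‖ ^ 2 * Q i j := by
  have : NeZero n := ⟨hn.ne'⟩
  have hcompact : IsCompact (Umat n ∩ PthetaSet θ x y) :=
    isCompact_Umat.inter_right (isClosed_PthetaSet θ x y)
  obtain ⟨P, hP, hmin⟩ := hcompact.exists_isMinOn
    ⟨_, diagonal_mem_Umat_inter_PthetaSet θ x y⟩ (continuous_kantorovichCost x y).continuousOn
  refine ⟨P, hP, ?_, fun Q hQ => hmin hQ⟩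
  rw [CWsq, tCost_image_OmegaTheta_empMeasure hx hy]
  exact IsLeast.csInf_eq ⟨Set.mem_image_of_mem _ hP, Set.forall_mem_image.2 fun Q hQ => hmin hQ⟩

end Kantorovich

/-- Kantorovich formulation of `CW_θ²` between point clouds with sorted
projections: it equals the minimum of the discrete transport cost over `U ∩ P_θ(X, Y)`,
and this minimum is attained. -/
theorem CWsq_discrete_kantorovich {d n : ℕ} (hn : 0 < n)
    (x y : Fin n → Euc d) (θ : Euc d) (hθ : ‖θ‖ = 1)
    (hx : Monotone fun i => (⟪θ, x i⟫ : ℝ)) (hy : Monotone fun i => (⟪θ, y i⟫ : ℝ)) :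
    ∃ P ∈ Umat n ∩ PthetaSet θ x y,
      CWsq θ (empMeasure x) (empMeasure y) = ∑ i, ∑ j, ‖x i - y j‖ ^ 2 * P i j ∧
      ∀ Q ∈ Umat n ∩ PthetaSet θ x y,
        ∑ i, ∑ j, ‖x i - y j‖ ^ 2 * P i j ≤ ∑ i, ∑ j, ‖x i - y j‖ ^ 2 * Q i j :=
  CWsq_discrete_kantorovich_general hn x y θ hx hy

end
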